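/- Let d ≥ 1, let f : ℝ^d → ℝ be continuously differentiable, let δ > 0 and x ∈ ℝ^d. Then the gradient of the ball-averaged function equals the rescaled sphere average: if u is uniformly distributed on the unit sphere S^{d−1} ⊆ ℝ^d and v is uniformly distributed on the closed unit ball of ℝ^d, then (d/δ)·E[f(x + δu)·u] = E[∇f(x + δv)]; equivalently, the gradient at x of the map y ↦ E[f(y + δv)] equals (d/δ)·E[f(x + δu)·u]. -/

import Mathlib

open MeasureTheory Metric
open scoped Gradient ENNReal

/-- The uniform (normalized rotation-invariant) probability measure on the unit
sphere of `ℝ^d`. -/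
noncomputable def sphereUniform (d : ℕ) :
    Measure (sphere (0 : EuclideanSpace ℝ (Fin d)) 1) :=
  ((volume : Measure (EuclideanSpace ℝ (Fin d))).toSphere Set.univ)⁻¹ •
    (volume : Measure (EuclideanSpace ℝ (Fin d))).toSphere

section Polar

variable {E : Type*} [NormedAddCommGroup E] [NormedSpace ℝ E] [Nontrivial E]
  [FiniteDimensional ℝ E] [MeasurableSpace E] [BorelSpace E]
  (μ : Measure E) [μ.IsAddHaarMeasure]

/-- Integration in polar coordinates. -/
theorem integral_eq_integral_Ioi_integral_sphere {F : E → ℝ} (hF : Integrable F μ) :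
    ∫ v, F v ∂μ = ∫ r in Set.Ioi (0 : ℝ), r ^ (Module.finrank ℝ E - 1) *
      ∫ u : sphere (0 : E) 1, F (r • (u : E)) ∂μ.toSphere := by
  have hmp := μ.measurePreserving_homeomorphUnitSphereProd
  have hemb := (homeomorphUnitSphereProd E).measurableEmbedding
  let G : sphere (0 : E) 1 × Set.Ioi (0 : ℝ) → ℝ := fun p => F ((p.2 : ℝ) • (p.1 : E))
  have hG : ∀ x : ({0}ᶜ : Set E), G (homeomorphUnitSphereProd E x) = F x := by
    intro x
    have hx : ‖(x : E)‖ ≠ 0 := norm_ne_zero_iff.2 x.2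
    simp [G, smul_smul, hx]
  have hGint : Integrable G (μ.toSphere.prod (.volumeIoiPow (Module.finrank ℝ E - 1))) := by
    rw [← hmp.integrable_comp_emb hemb]
    have : IntegrableOn F ({0}ᶜ : Set E) μ := hF.integrableOn
    rw [integrableOn_iff_comap_subtypeVal (measurableSet_singleton _).compl] at this
    exact this.congr (Filter.Eventually.of_forall fun x => (hG x).symm)
  calc
    ∫ v, F v ∂μ = ∫ x : ({0}ᶜ : Set E), F x ∂(μ.comap (↑)) := by
      rw [integral_subtype_comap (measurableSet_singleton _).compl, restrict_compl_singleton]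
    _ = ∫ p, G p ∂μ.toSphere.prod (.volumeIoiPow (Module.finrank ℝ E - 1)) := by
      rw [← hmp.integral_comp hemb]
      simp only [hG]
    _ = ∫ r, ∫ u, G (u, r) ∂μ.toSphere ∂(.volumeIoiPow (Module.finrank ℝ E - 1)) :=
      integral_prod_symm _ hGint
    _ = _ := by
      simp only [Measure.volumeIoiPow, ENNReal.ofReal, G]
      rw [integral_withDensity_eq_integral_smul,
        integral_subtype_comap measurableSet_Ioi fun a =>
          Real.toNNReal (a ^ (Module.finrank ℝ E - 1)) •
            ∫ u : sphere (0 : E) 1, F (a • (u : E)) ∂μ.toSphere,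
        setIntegral_congr_fun measurableSet_Ioi fun x hx => ?_]
      · rw [NNReal.smul_def, Real.coe_toNNReal _ (pow_nonneg hx.out.le _), smul_eq_mul]
      · exact (measurable_subtype_coe.pow_const _).real_toNNReal

theorem setIntegral_closedBall_eq_intervalIntegral {F : E → ℝ} (hF : Continuous F)
    {t : ℝ} (ht : 0 ≤ t) :
    ∫ v in closedBall (0 : E) t, F v ∂μ = ∫ r in 0..t, r ^ (Module.finrank ℝ E - 1) *
      ∫ u : sphere (0 : E) 1, F (r • (u : E)) ∂μ.toSphere := by
  have hint : IntegrableOn F (closedBall (0 : E) t) μ :=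
    hF.continuousOn.integrableOn_compact (isCompact_closedBall _ _)
  rw [← integral_indicator measurableSet_closedBall,
    integral_eq_integral_Ioi_integral_sphere μ
      ((integrable_indicator_iff measurableSet_closedBall).2 hint),
    intervalIntegral.integral_of_le ht, ← Set.Ioi_inter_Iic,
    ← setIntegral_indicator measurableSet_Iic]
  refine setIntegral_congr_fun measurableSet_Ioi fun r (hr : 0 < r) => ?_
  have hu : ∀ u : sphere (0 : E) 1, r • (u : E) ∈ closedBall (0 : E) t ↔ r ≤ t := by
    intro u
    simp [norm_smul, abs_of_pos hr]
  by_cases hrt : r ≤ t <;> simp [Set.indicator, hrt, hu, -mem_closedBall]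

end Polar

section Calculus

theorem hasDerivAt_sq_max_zero (s : ℝ) :
    HasDerivAt (fun s : ℝ => max s 0 ^ 2) (2 * max s 0) s := by
  rcases lt_trichotomy s 0 with hs | rfl | hs
  · rw [max_eq_right hs.le]
    refine ((hasDerivAt_const s (0 : ℝ)).congr_of_eventuallyEq ?_).congr_deriv (by simp)
    filter_upwards [Iio_mem_nhds hs] with y hy
    simp [max_eq_right (Set.mem_Iio.1 hy).le]
  · rw [hasDerivAt_iff_isLittleO]
    simp only [max_self, sub_zero, mul_zero, smul_zero, ne_eq, OfNat.ofNat_ne_zero,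
      not_false_eq_true, zero_pow]
    refine Asymptotics.IsBigO.trans_isLittleO (g := fun y : ℝ => y ^ 2) ?_
      (by simpa using Asymptotics.isLittleO_pow_id (𝕜 := ℝ) one_lt_two)
    refine Asymptotics.IsBigO.of_bound 1 (Filter.Eventually.of_forall fun y => ?_)
    rcases le_total y 0 with h | h <;> simp [h, sq_nonneg]
  · rw [max_eq_left hs.le]
    refine ((hasDerivAt_pow 2 s).congr_of_eventuallyEq ?_).congr_deriv (by simp)
    filter_upwards [Ioi_mem_nhds hs] with y hy
    simp [max_eq_left (Set.mem_Ioi.1 hy).le]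

theorem hasDerivAt_integral_sq_sub_sq_mul {K : ℝ → ℝ} (hK : Continuous K) (t : ℝ) :
    HasDerivAt (fun t => ∫ r in 0..t, (t ^ 2 - r ^ 2) * K r) (2 * t * ∫ r in 0..t, K r) t := by
  have hI : ∀ L : ℝ → ℝ, Continuous L → ∀ a b, IntervalIntegrable L volume a b :=
    fun L hL a b => hL.intervalIntegrable a b
  have hD : ∀ L : ℝ → ℝ, Continuous L → HasDerivAt (fun t => ∫ r in 0..t, L r) (L t) t :=
    fun L hL => hL.integral_hasStrictDerivAt 0 t |>.hasDerivAt
  have hsplit : (fun t => ∫ r in 0..t, (t ^ 2 - r ^ 2) * K r) =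
      fun t => t ^ 2 * (∫ r in 0..t, K r) - ∫ r in 0..t, r ^ 2 * K r := by
    funext s
    simp only [sub_mul]
    rw [intervalIntegral.integral_sub (hI _ (by fun_prop) _ _) (hI _ (by fun_prop) _ _),
      intervalIntegral.integral_const_mul]
  rw [hsplit]
  refine (((hasDerivAt_pow 2 t).mul (hD K hK)).sub
    (hD (fun r => r ^ 2 * K r) (by fun_prop))).congr_deriv ?_
  push_cast
  ring

theorem hasDerivAt_integral_sq_sub_sq_sq_mul {K : ℝ → ℝ} (hK : Continuous K) (t : ℝ) :
    HasDerivAt (fun t => ∫ r in 0..t, (t ^ 2 - r ^ 2) ^ 2 * K r)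
      (4 * t * ∫ r in 0..t, (t ^ 2 - r ^ 2) * K r) t := by
  have hI : ∀ L : ℝ → ℝ, Continuous L → ∀ a b, IntervalIntegrable L volume a b :=
    fun L hL a b => hL.intervalIntegrable a b
  have hsplit : (fun t => ∫ r in 0..t, (t ^ 2 - r ^ 2) ^ 2 * K r) =
      fun t => t ^ 2 * (∫ r in 0..t, (t ^ 2 - r ^ 2) * K r) -
        ∫ r in 0..t, (t ^ 2 - r ^ 2) * (r ^ 2 * K r) := by
    funext s
    rw [← intervalIntegral.integral_const_mul,
      ← intervalIntegral.integral_sub (hI _ (by fun_prop) _ _) (hI _ (by fun_prop) _ _)]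
    congr 1
    funext r
    ring
  have hr : (∫ r in 0..t, (t ^ 2 - r ^ 2) * K r) =
      t ^ 2 * (∫ r in 0..t, K r) - ∫ r in 0..t, r ^ 2 * K r := by
    simp only [sub_mul]
    rw [intervalIntegral.integral_sub (hI _ (by fun_prop) _ _) (hI _ (by fun_prop) _ _),
      intervalIntegral.integral_const_mul]
  rw [hsplit]
  refine (((hasDerivAt_pow 2 t).mul (hasDerivAt_integral_sq_sub_sq_mul hK t)).sub
    (hasDerivAt_integral_sq_sub_sq_mul (K := fun r => r ^ 2 * K r) (by fun_prop) t)).congr_deriv ?_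
  push_cast
  linear_combination -2 * t * hr

/-- Differentiating twice in `t` removes the weights `t ^ 2 - r ^ 2`. -/
theorem integral_eq_of_integral_sq_sub_sq_sq_mul_eq {H G : ℝ → ℝ} (hH : Continuous H)
    (hG : Continuous G)
    (h : ∀ t, 0 < t → ∫ r in 0..t, (t ^ 2 - r ^ 2) ^ 2 * H r =
      4 * ∫ r in 0..t, (t ^ 2 - r ^ 2) * (r * G r)) {t : ℝ} (ht : 0 < t) :
    ∫ r in 0..t, H r = G t := by
  have h1 : ∀ s, 0 < s → ∫ r in 0..s, (s ^ 2 - r ^ 2) * H r = 2 * ∫ r in 0..s, r * G r := by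
    intro s hs
    have e := (hasDerivAt_integral_sq_sub_sq_sq_mul hH s).unique
      (((hasDerivAt_integral_sq_sub_sq_mul (K := fun r => r * G r) (by fun_prop) s).const_mul
        4).congr_of_eventuallyEq (by filter_upwards [Ioi_mem_nhds hs] with r hr using h r hr))
    refine mul_left_cancel₀ (by positivity : 4 * s ≠ 0) ?_
    linear_combination e
  have e := (hasDerivAt_integral_sq_sub_sq_mul hH t).unique
    ((((Continuous.integral_hasStrictDerivAt (f := fun r => r * G r) (by fun_prop) 0
      t).hasDerivAt).const_mul 2).congr_of_eventuallyEq
        (by filter_upwards [Ioi_mem_nhds ht] with r hr using h1 r hr))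
  refine mul_left_cancel₀ (by positivity : 2 * t ≠ 0) ?_
  linear_combination e

end Calculus

section Divergence

variable {E : Type*} [NormedAddCommGroup E] [InnerProductSpace ℝ E]
  [FiniteDimensional ℝ E] [MeasurableSpace E] [BorelSpace E]
  (μ : Measure E) [μ.IsAddHaarMeasure]

theorem continuous_integral_sphere {k : ℝ → sphere (0 : E) 1 → ℝ}
    (hk : Continuous fun p : ℝ × sphere (0 : E) 1 => k p.1 p.2) :
    Continuous fun r => ∫ u, k r u ∂μ.toSphere := by
  simpa using continuous_parametric_integral_of_continuous (μ := μ.toSphere) hk isCompact_univ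

theorem integral_closedBall_sq_sub_norm_sq_mul_fderiv {g : E → ℝ} (hg : ContDiff ℝ 1 g) (w : E)
    {t : ℝ} (ht : 0 < t) :
    ∫ v in closedBall (0 : E) t, (t ^ 2 - ‖v‖ ^ 2) ^ 2 * fderiv ℝ g v w ∂μ =
      4 * ∫ v in closedBall (0 : E) t, (t ^ 2 - ‖v‖ ^ 2) * (inner ℝ v w * g v) ∂μ := by
  have hg' : Continuous fun v => fderiv ℝ g v w :=
    (hg.continuous_fderiv one_ne_zero).clm_apply continuous_const
  have hgc := hg.continuous
  let ψ : E → ℝ := fun v => max (t ^ 2 - ‖v‖ ^ 2) 0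
  have hψc : Continuous ψ := by fun_prop
  have hψ_in : ∀ v ∈ closedBall (0 : E) t, ψ v = t ^ 2 - ‖v‖ ^ 2 := by
    intro v hv
    have : ‖v‖ ≤ t := by simpa using hv
    exact max_eq_left (by nlinarith [norm_nonneg v])
  have hψ_out : ∀ v ∉ closedBall (0 : E) t, ψ v = 0 := by
    intro v hv
    have : t < ‖v‖ := by simpa using hv
    exact max_eq_right (by nlinarith [norm_nonneg v])
  have hint : ∀ k : E → ℝ, Continuous k → (∀ v ∉ closedBall (0 : E) t, k v = 0) →
      Integrable k μ := fun k hk h0 =>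
    hk.integrable_of_hasCompactSupport (HasCompactSupport.intro (isCompact_closedBall _ _) h0)
  have hd : ∀ v, HasFDerivAt (fun v => ψ v ^ 2)
      ((2 * ψ v) • (-(2 • innerSL ℝ v) : E →L[ℝ] ℝ)) v := fun v =>
    (hasDerivAt_sq_max_zero _).comp_hasFDerivAt v
      (((hasStrictFDerivAt_norm_sq v).hasFDerivAt).const_sub (t ^ 2))
  have hd' : ∀ v, ((2 * ψ v) • (-(2 • innerSL ℝ v) : E →L[ℝ] ℝ)) w * g v =
      -(4 * (ψ v * (inner ℝ v w * g v))) := by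
    intro v
    simp
    ring
  have key := integral_bilinear_hasFDerivAt_right_eq_neg_left_of_integrable (μ := μ)
    (f := fun v => ψ v ^ 2) (g := g) (g' := fderiv ℝ g) (v := w)
    (B := ContinuousLinearMap.mul ℝ ℝ)
    (by
      simp only [ContinuousLinearMap.mul_apply', hd']
      exact hint _ (by fun_prop) fun v hv => by simp [hψ_out v hv])
    (hint _ (by simp only [ContinuousLinearMap.mul_apply']; fun_prop)
      fun v hv => by simp [hψ_out v hv])
    (hint _ (by simp only [ContinuousLinearMap.mul_apply']; fun_prop)
      fun v hv => by simp [hψ_out v hv])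
    (fun v _ => hd v)
    (fun v _ => (hg.differentiable one_ne_zero v).hasFDerivAt)
  simp only [ContinuousLinearMap.mul_apply', hd', integral_neg, neg_neg, integral_const_mul] at key
  rw [← setIntegral_eq_integral_of_forall_compl_eq_zero (s := closedBall (0 : E) t)
      (fun v hv => by simp [hψ_out v hv]),
    ← setIntegral_eq_integral_of_forall_compl_eq_zero (s := closedBall (0 : E) t)
      (f := fun v => ψ v * (inner ℝ v w * g v)) (fun v hv => by simp [hψ_out v hv])] at key
  rw [setIntegral_congr_fun measurableSet_closedBall fun v hv => by rw [← hψ_in v hv], key,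
    setIntegral_congr_fun measurableSet_closedBall fun v hv => by rw [hψ_in v hv]]

/-- The divergence theorem on the unit ball, for the vector field `v ↦ g v • w`. -/
theorem integral_closedBall_fderiv_eq_integral_sphere [Nontrivial E] {g : E → ℝ}
    (hg : ContDiff ℝ 1 g) (w : E) :
    ∫ v in closedBall (0 : E) 1, fderiv ℝ g v w ∂μ =
      ∫ u : sphere (0 : E) 1, g u * inner ℝ (u : E) w ∂μ.toSphere := by
  have hg' : Continuous fun v => fderiv ℝ g v w :=
    (hg.continuous_fderiv one_ne_zero).clm_apply continuous_const
  have hgc := hg.continuous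
  have hcH : Continuous fun r : ℝ => ∫ u : sphere (0 : E) 1,
      fderiv ℝ g (r • (u : E)) w ∂μ.toSphere :=
    continuous_integral_sphere μ (hg'.comp (by fun_prop))
  have hcG : Continuous fun r : ℝ => ∫ u : sphere (0 : E) 1,
      g (r • (u : E)) * inner ℝ (u : E) w ∂μ.toSphere :=
    continuous_integral_sphere μ (by fun_prop)
  rw [setIntegral_closedBall_eq_intervalIntegral μ hg' zero_le_one,
    integral_eq_of_integral_sq_sub_sq_sq_mul_eq (G := fun r => r ^ (Module.finrank ℝ E - 1) *
      ∫ u : sphere (0 : E) 1, g (r • (u : E)) * inner ℝ (u : E) w ∂μ.toSphere)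
      (by fun_prop) (by fun_prop) (fun t ht => ?_) one_pos]
  · simp
  have key := integral_closedBall_sq_sub_norm_sq_mul_fderiv μ hg w ht
  rw [setIntegral_closedBall_eq_intervalIntegral μ (by fun_prop) ht.le,
    setIntegral_closedBall_eq_intervalIntegral μ (by fun_prop) ht.le] at key
  simp only [norm_smul, norm_eq_of_mem_sphere, mul_one, Real.norm_eq_abs, sq_abs,
    integral_const_mul, real_inner_smul_left, mul_assoc] at key
  simp only [mul_comm (g _), mul_left_comm _ (_ ^ (Module.finrank ℝ E - 1))]
  exact key

/-- Differentiation under the integral sign for ball averages of a `C¹` function. -/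
theorem hasFDerivAt_integral_closedBall {f : E → ℝ} (hf : ContDiff ℝ 1 f) (δ : ℝ) (x : E) :
    HasFDerivAt (fun y => ∫ v in closedBall (0 : E) 1, f (y + δ • v) ∂μ)
      (∫ v in closedBall (0 : E) 1, fderiv ℝ f (x + δ • v) ∂μ) x := by
  have hfc := hf.continuous
  have hfd := hf.continuous_fderiv one_ne_zero
  have hK : IsCompact (closedBall x 1 ×ˢ closedBall (0 : E) 1) :=
    (isCompact_closedBall _ _).prod (isCompact_closedBall _ _)
  obtain ⟨C, hC⟩ := hK.exists_bound_of_continuousOn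
    (f := fun p : E × E => fderiv ℝ f (p.1 + δ • p.2)) (by fun_prop)
  refine hasFDerivAt_integral_of_dominated_of_fderiv_le (bound := fun _ => C)
    (F' := fun y v => fderiv ℝ f (y + δ • v))
    (closedBall_mem_nhds x one_pos)
    (Filter.Eventually.of_forall fun y => Continuous.aestronglyMeasurable (by fun_prop))
    (ContinuousOn.integrableOn_compact (isCompact_closedBall _ _) (by fun_prop))
    (Continuous.aestronglyMeasurable (by fun_prop)) ?_ ?_ ?_
  · filter_upwards [ae_restrict_mem measurableSet_closedBall] with v hv y hy
    exact hC (y, v) ⟨hy, hv⟩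
  · exact integrableOn_const (measure_closedBall_lt_top.ne)
  · exact Filter.Eventually.of_forall fun v y _ =>
      (hasFDerivAt_comp_add_right (δ • v)).2 (hf.differentiable one_ne_zero _).hasFDerivAt

theorem gradient_average_closedBall {f : E → ℝ} (hf : ContDiff ℝ 1 f) (δ : ℝ) (x : E) :
    ∇ (fun y => ⨍ v in closedBall (0 : E) 1, f (y + δ • v) ∂μ) x =
      ⨍ v in closedBall (0 : E) 1, ∇ f (x + δ • v) ∂μ := by
  simp only [setAverage_eq, gradient]
  rw [((hasFDerivAt_integral_closedBall μ hf δ x).fun_const_smul _).fderiv, map_smulₛₗ]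
  congr 1
  exact (((InnerProductSpace.toDual ℝ E).symm.toContinuousLinearEquiv).integral_comp_comm _).symm

/-- The single-point estimator on the sphere averages to the mean gradient over the ball. -/
theorem smul_average_sphere_eq_average_gradient [Nontrivial E] {f : E → ℝ}
    (hf : ContDiff ℝ 1 f) {δ : ℝ} (hδ : δ ≠ 0) (x : E) :
    ((Module.finrank ℝ E : ℝ) / δ) • (⨍ u : sphere (0 : E) 1, f (x + δ • (u : E)) • (u : E)
        ∂μ.toSphere) =
      ⨍ v in closedBall (0 : E) 1, ∇ f (x + δ • v) ∂μ := by
  have hfc := hf.continuous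
  have hfd := hf.continuous_fderiv one_ne_zero
  have hgrad : Continuous (∇ f) := (InnerProductSpace.toDual ℝ E).symm.continuous.comp hfd
  have hvol : μ.real (closedBall (0 : E) 1) = μ.real (ball (0 : E) 1) := by
    simp only [Measure.real, Measure.addHaar_closedBall_eq_addHaar_ball]
  have hn : (Module.finrank ℝ E : ℝ) ≠ 0 := by exact_mod_cast Module.finrank_pos.ne'
  have hsphere : Integrable (fun u : sphere (0 : E) 1 => f (x + δ • (u : E)) • (u : E))
      μ.toSphere := by
    have : Continuous fun u : sphere (0 : E) 1 => f (x + δ • (u : E)) • (u : E) := by fun_prop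
    exact this.integrable_of_hasCompactSupport (HasCompactSupport.of_compactSpace _)
  have hball : IntegrableOn (fun v => ∇ f (x + δ • v)) (closedBall (0 : E) 1) μ :=
    ContinuousOn.integrableOn_compact (isCompact_closedBall _ _) (by fun_prop)
  have key : ∫ u : sphere (0 : E) 1, f (x + δ • (u : E)) • (u : E) ∂μ.toSphere =
      δ • ∫ v in closedBall (0 : E) 1, ∇ f (x + δ • v) ∂μ := by
    refine ext_inner_left ℝ fun w => ?_
    rw [← integral_inner hsphere, inner_smul_right, ← integral_inner hball,
      ← integral_const_mul]
    have hderiv : ∀ v, fderiv ℝ (fun v => f (x + δ • v)) v w =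
        δ * inner ℝ w (∇ f (x + δ • v)) := by
      intro v
      have h := ((hf.differentiable one_ne_zero (x + δ • v)).hasFDerivAt).comp v
        (((hasFDerivAt_id v).const_smul δ).const_add x)
      rw [show fderiv ℝ (fun v => f (x + δ • v)) v = _ from h.fderiv, real_inner_comm,
        inner_gradient_left]
      simp
    have hdiv := integral_closedBall_fderiv_eq_integral_sphere μ
      (g := fun v => f (x + δ • v)) (by fun_prop) w
    simp only [hderiv] at hdiv
    rw [hdiv]
    simp only [inner_smul_right, real_inner_comm w]
  rw [average_eq, setAverage_eq, key, μ.toSphere_real_apply_univ, hvol, smul_smul, smul_smul]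
  congr 1
  field_simp

end Divergence

/-- Unbiasedness of the single-point zeroth-order gradient estimator: for a `C¹`
function `f`, `(d/δ) E[f(x+δu) u]` over the uniform unit sphere equals the
average of `∇f(x+δv)` over the uniform unit ball; equivalently it is the gradient
at `x` of `y ↦ E[f(y+δv)]`. -/
theorem zeroth_order_estimator_unbiased (d : ℕ) (hd : 1 ≤ d)
    (f : EuclideanSpace ℝ (Fin d) → ℝ) (hf : ContDiff ℝ 1 f)
    (δ : ℝ) (hδ : 0 < δ) (x : EuclideanSpace ℝ (Fin d)) :
    ((d : ℝ) / δ) • (∫ u : sphere (0 : EuclideanSpace ℝ (Fin d)) 1,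
        f (x + δ • (u : EuclideanSpace ℝ (Fin d))) • (u : EuclideanSpace ℝ (Fin d))
        ∂(sphereUniform d)) =
      (⨍ v in closedBall (0 : EuclideanSpace ℝ (Fin d)) 1, ∇ f (x + δ • v)) ∧
    ∇ (fun y => ⨍ v in closedBall (0 : EuclideanSpace ℝ (Fin d)) 1, f (y + δ • v)) x =
      ((d : ℝ) / δ) • (∫ u : sphere (0 : EuclideanSpace ℝ (Fin d)) 1,
        f (x + δ • (u : EuclideanSpace ℝ (Fin d))) • (u : EuclideanSpace ℝ (Fin d))
        ∂(sphereUniform d)) := by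
  have : Nonempty (Fin d) := ⟨⟨0, hd⟩⟩
  have hsphere := smul_average_sphere_eq_average_gradient volume hf hδ.ne' x
  rw [finrank_euclideanSpace_fin] at hsphere
  exact ⟨hsphere, (gradient_average_closedBall volume hf δ x).trans hsphere.symm⟩
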